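/- arXiv:2311.06959 — 2 statements merged into one kernel-verified Lean document; each statement's English description precedes it below -/
import Mathlib

section
/- Let q1, a, q2 be points of the Euclidean plane EuclideanSpace ℝ (Fin 2) and let b_min ≥ 0. If ‖q2 − q1‖² − 2⟨a − q1, 2q2 − a − q1⟩ ≤ −b_min², then ‖q2 − q1‖ ≥ b_min. -/
open RealInnerProductSpace

section

variable {E : Type*} [SeminormedAddCommGroup E] [InnerProductSpace ℝ E]

theorem real_inner_sub_add_eq_norm_sq_sub_norm_sq (x y : E) :
    ⟪x - y, x + y⟫ = ‖x‖ ^ 2 - ‖y‖ ^ 2 := by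
  simp only [inner_sub_left, inner_add_right, real_inner_self_eq_norm_sq, real_inner_comm x y]
  ring

theorem real_inner_sub_two_smul_sub_sub (p a q : E) :
    ⟪a - p, (2 : ℝ) • q - a - p⟫ = ‖q - p‖ ^ 2 - ‖q - a‖ ^ 2 := by
  have sub_eq : a - p = (q - p) - (q - a) := by abel
  have add_eq : (2 : ℝ) • q - a - p = (q - p) + (q - a) := by module
  rw [sub_eq, add_eq, real_inner_sub_add_eq_norm_sq_sub_norm_sq]

/-- The inner product is the first-order expansion of `‖q - p‖ ^ 2` in `q` around the anchor `a`,
so this is convexity of the squared norm. -/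
theorem real_inner_sub_two_smul_sub_sub_le (p a q : E) :
    ⟪a - p, (2 : ℝ) • q - a - p⟫ ≤ ‖q - p‖ ^ 2 := by
  rw [real_inner_sub_two_smul_sub_sub]
  exact sub_le_self _ (sq_nonneg _)

theorem stmt_6_general (q1 a q2 : E) (bmin : ℝ)
    (h : ‖q2 - q1‖ ^ 2 - 2 * ⟪a - q1, (2 : ℝ) • q2 - a - q1⟫ ≤ -bmin ^ 2) :
    bmin ≤ ‖q2 - q1‖ := by
  have tangent_le := real_inner_sub_two_smul_sub_sub_le q1 a q2
  have sq_le : bmin ^ 2 ≤ ‖q2 - q1‖ ^ 2 := by linarith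
  exact le_of_sq_le_sq sq_le (norm_nonneg _)

end

/-- Soundness of the convexified minimum-separation constraint C̃5: any point
feasible for C̃5 is feasible for the original safety constraint C5. -/
theorem stmt_6 (q1 a q2 : EuclideanSpace ℝ (Fin 2)) (bmin : ℝ) (hb : 0 ≤ bmin)
    (h : ‖q2 - q1‖ ^ 2 - 2 * ⟪a - q1, (2 : ℝ) • q2 - a - q1⟫ ≤ -bmin ^ 2) :
    ‖q2 - q1‖ ≥ bmin :=
  stmt_6_general q1 a q2 bmin h
end

section
/- Let t > 0, z1 > 0, λ > 0, x_t ∈ ℝ, and let the master UAV position be q1 = (x_t − t·z1, z1). Then the slant range r1 = ‖q1 − (x_t, 0)‖ equals z1·√(1 + t²), the look-angle sine sin θ1 := (x_t − x1)/r1 equals t/√(1 + t²), and hence r1·sin θ1 = t·z1. Moreover, for any slave position q2 = (x2, z2) with (x_t − x2) − t·z2 ≠ 0, the height of ambiguity h_amb = λ·r1·sin θ1 / b⊥(q2), where b⊥(q2) = |(x_t − x2) − t·z2|/√(t² + 1), equals λ·t·z1·√(t² + 1) / |(x_t − x2) − t·z2|. -/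
/-!
The slant range cancels in `r₁ sin θ₁`, which is the horizontal offset from the master to the
target. The placement condition makes this offset `t = tan θ₁` times the height of the master above
the target, and Pythagoras gives the slant range itself.
-/

/-- Constraint C2 on a master at `q` looking at the target `p`, for a look angle of tangent `t` from
the vertical. Throughout, coordinate `0` is ground range and coordinate `1` is altitude; the paper's
target has altitude `p 1 = 0`. -/
def PlacementCondition (t : ℝ) (q p : EuclideanSpace ℝ (Fin 2)) : Prop :=
  q 0 = p 0 - t * (q 1 - p 1)

/-- The sine of the look angle, measured from the vertical through `q`, at which the master `q` sees
the target `p`. It is negative when the target lies on the side of decreasing ground range. -/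
noncomputable def lookAngleSine (q p : EuclideanSpace ℝ (Fin 2)) : ℝ :=
  (p 0 - q 0) / ‖q - p‖

/-- The perpendicular baseline `b⊥` of a slave at `q₂`: its distance to the line of sight through
the target `p` whose angle from the vertical has tangent `t`. -/
noncomputable def perpBaseline (t : ℝ) (p q₂ : EuclideanSpace ℝ (Fin 2)) : ℝ :=
  |(p 0 - q₂ 0) - t * (q₂ 1 - p 1)| / √(t ^ 2 + 1)

/-- The height of ambiguity `λ r₁ sin θ₁ / b` of a radar of wavelength `lam` at `q` observing the
target `p` with perpendicular baseline `b`. -/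
noncomputable def heightOfAmbiguity (lam : ℝ) (q p : EuclideanSpace ℝ (Fin 2)) (b : ℝ) : ℝ :=
  lam * (‖q - p‖ * lookAngleSine q p) / b

section

variable {t : ℝ} {q p : EuclideanSpace ℝ (Fin 2)}

theorem norm_eq_abs_mul_sqrt_of_apply_zero_eq_mul {v : EuclideanSpace ℝ (Fin 2)}
    (hv : v 0 = t * v 1) : ‖v‖ = |v 1| * √(1 + t ^ 2) := by
  have hsq : v 0 ^ 2 + v 1 ^ 2 = v 1 ^ 2 * (1 + t ^ 2) := by rw [hv]; ring
  rw [EuclideanSpace.norm_eq, Fin.sum_univ_two, Real.norm_eq_abs, Real.norm_eq_abs, sq_abs, sq_abs,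
    hsq, Real.sqrt_mul (sq_nonneg _), Real.sqrt_sq_eq_abs]

theorem norm_sub_mul_lookAngleSine (q p : EuclideanSpace ℝ (Fin 2)) :
    ‖q - p‖ * lookAngleSine q p = p 0 - q 0 := by
  refine mul_div_cancel_of_imp' fun hnorm => ?_
  rw [norm_sub_eq_zero_iff.mp hnorm, sub_self]

namespace PlacementCondition

theorem horizontal_offset (h : PlacementCondition t q p) : p 0 - q 0 = t * (q 1 - p 1) := by
  rw [PlacementCondition] at h
  rw [h, sub_sub_cancel]

theorem norm_sub_eq (h : PlacementCondition t q p) (hz : p 1 ≤ q 1) :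
    ‖q - p‖ = (q 1 - p 1) * √(1 + t ^ 2) := by
  have hslope : (q - p) 0 = -t * (q - p) 1 := by
    rw [PiLp.sub_apply, PiLp.sub_apply, neg_mul, ← h.horizontal_offset, neg_sub]
  rw [norm_eq_abs_mul_sqrt_of_apply_zero_eq_mul hslope, PiLp.sub_apply,
    abs_of_nonneg (sub_nonneg.mpr hz), neg_sq]

theorem lookAngleSine_eq (h : PlacementCondition t q p) (hz : p 1 < q 1) :
    lookAngleSine q p = t / √(1 + t ^ 2) := by
  rw [lookAngleSine, h.norm_sub_eq hz.le, h.horizontal_offset, mul_comm t,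
    mul_div_mul_left _ _ (sub_pos.mpr hz).ne']

theorem norm_sub_mul_lookAngleSine_eq (h : PlacementCondition t q p) :
    ‖q - p‖ * lookAngleSine q p = t * (q 1 - p 1) :=
  (norm_sub_mul_lookAngleSine q p).trans h.horizontal_offset

theorem heightOfAmbiguity_perpBaseline (h : PlacementCondition t q p) (lam : ℝ)
    (q₂ : EuclideanSpace ℝ (Fin 2)) :
    heightOfAmbiguity lam q p (perpBaseline t p q₂) =
      lam * t * (q 1 - p 1) * √(t ^ 2 + 1) / |(p 0 - q₂ 0) - t * (q₂ 1 - p 1)| := by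
  rw [heightOfAmbiguity, h.norm_sub_mul_lookAngleSine_eq, perpBaseline, div_div_eq_mul_div,
    mul_assoc lam t]

end PlacementCondition

theorem stmt_13_general (lam : ℝ) (h : PlacementCondition t q p) (hz : p 1 < q 1) :
    ‖q - p‖ = (q 1 - p 1) * √(1 + t ^ 2) ∧
    lookAngleSine q p = t / √(1 + t ^ 2) ∧
    ‖q - p‖ * lookAngleSine q p = t * (q 1 - p 1) ∧
    ∀ q₂ : EuclideanSpace ℝ (Fin 2), (p 0 - q₂ 0) - t * (q₂ 1 - p 1) ≠ 0 →
      heightOfAmbiguity lam q p (perpBaseline t p q₂) =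
        lam * t * (q 1 - p 1) * √(t ^ 2 + 1) / |(p 0 - q₂ 0) - t * (q₂ 1 - p 1)| :=
  ⟨h.norm_sub_eq hz.le, h.lookAngleSine_eq hz, h.norm_sub_mul_lookAngleSine_eq,
    fun q₂ _ => h.heightOfAmbiguity_perpBaseline lam q₂⟩

end

/-- Closed form of the height of ambiguity: with the master placement
`q1 = (x_t - t·z1, z1)` looking at the target `(x_t, 0)`, the slant range is
`r1 = z1·√(1 + t²)`, the look-angle sine is `t/√(1 + t²)`, hence
`r1·sin θ1 = t·z1`, and `h_amb = λ·r1·sin θ1 / b⊥(q2)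
= λ·t·z1·√(t² + 1) / |(x_t - x2) - t·z2|`. -/
theorem stmt_13 (t z1 lam xt : ℝ) (ht : 0 < t) (hz1 : 0 < z1) (hlam : 0 < lam)
    (q1 pt : EuclideanSpace ℝ (Fin 2))
    (hq1x : q1 0 = xt - t * z1) (hq1z : q1 1 = z1)
    (hptx : pt 0 = xt) (hptz : pt 1 = 0) :
    ‖q1 - pt‖ = z1 * Real.sqrt (1 + t ^ 2) ∧
    (xt - q1 0) / ‖q1 - pt‖ = t / Real.sqrt (1 + t ^ 2) ∧
    ‖q1 - pt‖ * ((xt - q1 0) / ‖q1 - pt‖) = t * z1 ∧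
    (∀ x2 z2 : ℝ, (xt - x2) - t * z2 ≠ 0 →
      lam * (‖q1 - pt‖ * ((xt - q1 0) / ‖q1 - pt‖)) /
          (|(xt - x2) - t * z2| / Real.sqrt (t ^ 2 + 1)) =
        lam * t * z1 * Real.sqrt (t ^ 2 + 1) / |(xt - x2) - t * z2|) := by
  subst hptx hq1z
  have hplace : PlacementCondition t q1 pt := by rw [PlacementCondition, hq1x, hptz, sub_zero]
  have hclosed := stmt_13_general lam hplace (hptz.trans_lt hz1)
  simp only [heightOfAmbiguity, lookAngleSine, perpBaseline, hptz, sub_zero] at hclosed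
  obtain ⟨hrange, hsine, hoffset, hheight⟩ := hclosed
  exact ⟨hrange, hsine, hoffset, fun x2 z2 => hheight !₂[x2, z2]⟩
end
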